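/- arXiv:2408.02744 — 2 statements merged into one kernel-verified Lean document; each statement's English description precedes it below -/
import Mathlib

section
/- Let Λ be an even, self-dual Lorentzian lattice of signature (m,n) such that the quotient group Λ/Λ_0 is finite. Then the cardinalities |Λ/Λ_0|, |(Λ_1^0)^*/Λ_1^0| and |(Λ_2^0)^*/Λ_2^0| are all equal, and the homomorphisms φ₁ : Λ/Λ_0 → (Λ_1^0)^*/Λ_1^0, [(α,β)] ↦ [α], and φ₂ : Λ/Λ_0 → (Λ_2^0)^*/Λ_2^0, [(α,β)] ↦ [β], are group isomorphisms. -/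
open Finset

noncomputable section

/-- The Lorentzian inner product of signature `(m,n)` on `ℝ^m × ℝ^n`. -/
def lorentzForm {m n : ℕ} (x y : (Fin m → ℝ) × (Fin n → ℝ)) : ℝ :=
  (∑ i, x.1 i * y.1 i) - (∑ j, x.2 j * y.2 j)

/-- `Λ` is an even lattice: `λ ∘ λ ∈ 2ℤ` for all `λ ∈ Λ`. -/
def IsEvenLat {m n : ℕ} (Λ : Submodule ℤ ((Fin m → ℝ) × (Fin n → ℝ))) : Prop :=
  ∀ x ∈ Λ, ∃ k : ℤ, lorentzForm x x = 2 * k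

/-- `Λ` is an integral lattice: `λ ∘ μ ∈ ℤ` for all `λ, μ ∈ Λ`. -/
def IsIntegralLat {m n : ℕ} (Λ : Submodule ℤ ((Fin m → ℝ) × (Fin n → ℝ))) : Prop :=
  ∀ x ∈ Λ, ∀ y ∈ Λ, ∃ k : ℤ, lorentzForm x y = (k : ℝ)

/-- `Λ` is self-dual with respect to the Lorentzian form. -/
def IsSelfDualLat {m n : ℕ} (Λ : Submodule ℤ ((Fin m → ℝ) × (Fin n → ℝ))) : Prop :=
  (Λ : Set ((Fin m → ℝ) × (Fin n → ℝ)))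
    = {v | ∀ y ∈ Λ, ∃ k : ℤ, lorentzForm v y = (k : ℝ)}

/-- The sublattice `Λ_1^0 = {α ∈ ℝ^m : (α,0) ∈ Λ}`. -/
def lat10 {m n : ℕ} (Λ : Submodule ℤ ((Fin m → ℝ) × (Fin n → ℝ))) :
    Submodule ℤ (Fin m → ℝ) :=
  Λ.comap (LinearMap.inl ℤ (Fin m → ℝ) (Fin n → ℝ))

/-- The sublattice `Λ_2^0 = {β ∈ ℝ^n : (0,β) ∈ Λ}`. -/
def lat20 {m n : ℕ} (Λ : Submodule ℤ ((Fin m → ℝ) × (Fin n → ℝ))) :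
    Submodule ℤ (Fin n → ℝ) :=
  Λ.comap (LinearMap.inr ℤ (Fin m → ℝ) (Fin n → ℝ))

/-- The sublattice `Λ_0 = Λ_1^0 ⊕ Λ_2^0`. -/
def lat0 {m n : ℕ} (Λ : Submodule ℤ ((Fin m → ℝ) × (Fin n → ℝ))) :
    Submodule ℤ ((Fin m → ℝ) × (Fin n → ℝ)) :=
  (lat10 Λ).prod (lat20 Λ)

/-- The dual lattice `L^* = {x : ⟨x,y⟩ ∈ ℤ for all y ∈ L}` of a lattice `L ⊆ ℝ^d`. -/
def dualLat {d : ℕ} (L : Submodule ℤ (Fin d → ℝ)) : Submodule ℤ (Fin d → ℝ) where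
  carrier := {x | ∀ y ∈ L, ∃ k : ℤ, ∑ i, x i * y i = (k : ℝ)}
  add_mem' := by
    intro a b ha hb y hy
    obtain ⟨k1, h1⟩ := ha y hy
    obtain ⟨k2, h2⟩ := hb y hy
    refine ⟨k1 + k2, ?_⟩
    push_cast
    rw [← h1, ← h2, ← Finset.sum_add_distrib]
    exact Finset.sum_congr rfl fun i _ => by simp [add_mul]
  zero_mem' := fun y hy => ⟨0, by simp⟩
  smul_mem' := by
    intro c a ha y hy
    obtain ⟨k, h⟩ := ha y hy
    refine ⟨c * k, ?_⟩
    push_cast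
    rw [← h, Finset.mul_sum]
    exact Finset.sum_congr rfl fun i _ => by simp [zsmul_eq_mul]; ring

end

/-!
Self-duality says that `Λ₁⁰` is the Euclidean dual of the projection `L = pr₁ Λ`, so that
`(Λ₁⁰)^* = L^{**}` and `Λ/Λ₀ ≅ L/Λ₁⁰`; everything reduces to `L^{**} = L`, that is, to `L` being a
lattice in `ℝ^m`. It spans: a vector orthogonal to `L` lies in `L^* = Λ₁⁰ ⊆ L`, hence is orthogonal
to itself. It is discrete: if `N` is the order of `Λ/Λ₀`, then `N L ⊆ Λ₁⁰ = L^*`, so `N ⟨x, x⟩` is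
an integer for every `x ∈ L`. The second factor is handled in the same way.
-/

section DualSubmodule

open LinearMap (BilinForm)

theorem nondegenerate_of_self_eq_zero {R M : Type*} [CommRing R] [AddCommGroup M] [Module R M]
    {B : BilinForm R M} (hB : ∀ x, B x x = 0 → x = 0) : B.Nondegenerate :=
  ⟨fun x hx => hB x (hx x), fun x hx => hB x (hx x)⟩

theorem span_eq_top_of_dualSubmodule_le {R K V : Type*} [CommRing R] [Field K] [AddCommGroup V]
    [Algebra R K] [Module R V] [Module K V] [IsScalarTower R K V] [FiniteDimensional K V]
    {B : BilinForm K V} (hB : ∀ x, B x x = 0 → x = 0) {L : Submodule R V}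
    (hL : B.dualSubmodule L ≤ L) : Submodule.span K (L : Set V) = ⊤ := by
  by_contra hspan
  obtain ⟨f, hf, hfspan⟩ :=
    Submodule.exists_dual_map_eq_bot_of_lt_top (lt_top_iff_ne_top.mpr hspan) inferInstance
  have hfL : ∀ y ∈ L, f y = 0 := fun y hy =>
    LinearMap.le_ker_iff_map.mpr hfspan (Submodule.subset_span hy)
  obtain ⟨a, rfl⟩ := (B.toDual (nondegenerate_of_self_eq_zero hB)).surjective f
  have ha : a ∈ L := hL fun y hy => (hfL y hy).symm ▸ zero_mem _
  exact hf (by rw [hB a (hfL a ha), map_zero])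

theorem discreteTopology_of_nsmul_mem_dualSubmodule {E : Type*} [NormedAddCommGroup E]
    [NormedSpace ℝ E] [FiniteDimensional ℝ E] {B : BilinForm ℝ E} (hB : ∀ x, B x x = 0 → x = 0)
    {L : Submodule ℤ E} {N : ℕ} (hN : N ≠ 0) (hNL : ∀ x ∈ L, N • x ∈ B.dualSubmodule L) :
    DiscreteTopology L := by
  have hB₂ : Continuous fun p : E × E => B p.1 p.2 := B.toContinuousBilinearMap.continuous₂
  have hcont : Continuous fun x : L => |N * B x x| :=
    (continuous_const.mul
      (hB₂.comp (continuous_subtype_val.prodMk continuous_subtype_val))).abs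
  have hzero : {x : L | |N * B x x| < 1} = {0} := by
    refine Set.eq_singleton_iff_unique_mem.mpr ⟨by simp, fun x hx => ?_⟩
    obtain ⟨k, hk⟩ := Submodule.mem_one.mp (hNL x x.2 x x.2)
    have hk' : (k : ℝ) = N * B x x := by simpa using hk
    have hk0 : k = 0 := Int.abs_lt_one_iff.mp (by exact_mod_cast hk'.symm ▸ hx.out)
    have hxx : B x x = 0 := by simpa [hk0, hN] using hk'.symm
    exact Subtype.ext (hB x hxx)
  exact discreteTopology_of_isOpen_singleton_zero
    (hzero ▸ isOpen_Iio.preimage hcont)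

theorem dualSubmodule_dualSubmodule_of_isZLattice {E : Type*} [NormedAddCommGroup E]
    [NormedSpace ℝ E] [FiniteDimensional ℝ E] {B : BilinForm ℝ E} (hB : B.Nondegenerate)
    (hsymm : B.IsSymm) (L : Submodule ℤ E) [DiscreteTopology L] [IsZLattice ℝ L] :
    B.dualSubmodule (B.dualSubmodule L) = L := by
  have := ZLattice.module_finite ℝ L
  have := ZLattice.module_free ℝ L
  let b := (Module.Free.chooseBasis ℤ L).ofZLatticeBasis ℝ L
  have hb : Submodule.span ℤ (Set.range b) = L := Module.Basis.ofZLatticeBasis_span ℝ L _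
  rw [← hb, BilinForm.dualSubmodule_dualSubmodule_of_basis B hB hsymm]

theorem dualSubmodule_dualSubmodule_of_nsmul_mem {E : Type*} [NormedAddCommGroup E]
    [NormedSpace ℝ E] [FiniteDimensional ℝ E] {B : BilinForm ℝ E} (hB : ∀ x, B x x = 0 → x = 0)
    (hsymm : B.IsSymm) {L : Submodule ℤ E} (hL : B.dualSubmodule L ≤ L) {N : ℕ} (hN : N ≠ 0)
    (hNL : ∀ x ∈ L, N • x ∈ B.dualSubmodule L) : B.dualSubmodule (B.dualSubmodule L) = L := by
  have := discreteTopology_of_nsmul_mem_dualSubmodule hB hN hNL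
  have : IsZLattice ℝ L := ⟨span_eq_top_of_dualSubmodule_le hB hL⟩
  exact dualSubmodule_dualSubmodule_of_isZLattice (nondegenerate_of_self_eq_zero hB) hsymm L

end DualSubmodule

section DualLat

variable {d : ℕ} {L : Submodule ℤ (Fin d → ℝ)}

theorem mem_dualLat_iff {x : Fin d → ℝ} :
    x ∈ dualLat L ↔ ∀ y ∈ L, ∃ k : ℤ, x ⬝ᵥ y = (k : ℝ) :=
  Iff.rfl

theorem dualLat_eq_dualSubmodule (L : Submodule ℤ (Fin d → ℝ)) :
    dualLat L = LinearMap.BilinForm.dualSubmodule (dotProductBilin ℝ ℝ) L := by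
  ext x
  simp [mem_dualLat_iff, LinearMap.BilinForm.mem_dualSubmodule, Submodule.mem_one, eq_comm]

theorem dualLat_dualLat_of_nsmul_mem (hL : dualLat L ≤ L) {N : ℕ} (hN : N ≠ 0)
    (hNL : ∀ x ∈ L, N • x ∈ dualLat L) : dualLat (dualLat L) = L := by
  simp only [dualLat_eq_dualSubmodule] at hL hNL ⊢
  have hdef (x : Fin d → ℝ) (hx : x ⬝ᵥ x = 0) : x = 0 := dotProduct_self_eq_zero.mp hx
  exact dualSubmodule_dualSubmodule_of_nsmul_mem hdef ⟨dotProduct_comm⟩ hL hN hNL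

end DualLat

section QuotientEquiv

variable {R M N : Type*} [Ring R] [AddCommGroup M] [AddCommGroup N] [Module R M] [Module R N]
  {f : M →ₗ[R] N} {S P : Submodule R M} {T Q : Submodule R N}

/-- The isomorphism `S/P ≃ T/Q`, `[x] ↦ [f x]`, induced by a linear map `f` carrying `S` onto `T`
such that `P` is the preimage of `Q` in `S`. As `P ≤ S` and `Q ≤ T` are not assumed, the quotients
are really `S/(P ∩ S)` and `T/(Q ∩ T)`. -/
noncomputable def quotientEquivOfMapEq (hST : S.map f = T) (hPQ : ∀ x ∈ S, x ∈ P ↔ f x ∈ Q) :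
    (S ⧸ P.comap S.subtype) ≃ₗ[R] (T ⧸ Q.comap T.subtype) :=
  have hf : ∀ x ∈ S, f x ∈ T := fun _ hx => hST ▸ Submodule.mem_map_of_mem hx
  have hcomap : P.comap S.subtype = (Q.comap T.subtype).comap (f.restrict hf) :=
    Submodule.ext fun x => hPQ x x.2
  LinearEquiv.ofBijective (Submodule.mapQ _ _ (f.restrict hf) hcomap.le) <| by
    constructor
    · rw [← LinearMap.ker_eq_bot, Submodule.ker_mapQ, ← LinearMap.le_ker_iff_map, Submodule.ker_mkQ]
      exact hcomap.ge
    · subst hST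
      rintro ⟨⟨_, x, hx, rfl⟩⟩
      exact ⟨Submodule.Quotient.mk ⟨x, hx⟩, rfl⟩

theorem quotientEquivOfMapEq_mk (hST : S.map f = T) (hPQ : ∀ x ∈ S, x ∈ P ↔ f x ∈ Q) {x : M}
    (hx : x ∈ S) (hfx : f x ∈ T) :
    quotientEquivOfMapEq hST hPQ (Submodule.Quotient.mk ⟨x, hx⟩) =
      Submodule.Quotient.mk ⟨f x, hfx⟩ :=
  rfl

end QuotientEquiv

section Lorentzian

variable {m n : ℕ} {Λ : Submodule ℤ ((Fin m → ℝ) × (Fin n → ℝ))}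

theorem mem_lat0_iff_fst_mem_lat10 {x : (Fin m → ℝ) × (Fin n → ℝ)} (hx : x ∈ Λ) :
    x ∈ lat0 Λ ↔ x.1 ∈ lat10 Λ := by
  obtain ⟨a, b⟩ := x
  refine ⟨And.left, fun h : (a, 0) ∈ Λ => ⟨h, ?_⟩⟩
  change (0, b) ∈ Λ
  simpa using sub_mem hx h

theorem mem_lat0_iff_snd_mem_lat20 {x : (Fin m → ℝ) × (Fin n → ℝ)} (hx : x ∈ Λ) :
    x ∈ lat0 Λ ↔ x.2 ∈ lat20 Λ := by
  obtain ⟨a, b⟩ := x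
  refine ⟨And.right, fun h : (0, b) ∈ Λ => ⟨?_, h⟩⟩
  change (a, 0) ∈ Λ
  simpa using sub_mem hx h

theorem exists_nsmul_mem_lat0 (hfin : Finite (Λ ⧸ (lat0 Λ).comap Λ.subtype)) :
    ∃ N : ℕ, N ≠ 0 ∧ ∀ x ∈ Λ, N • x ∈ lat0 Λ := by
  refine ⟨Nat.card (Λ ⧸ (lat0 Λ).comap Λ.subtype), Nat.card_pos.ne', fun x hx => ?_⟩
  have h := card_nsmul_eq_zero' (x := Submodule.Quotient.mk (p := (lat0 Λ).comap Λ.subtype) ⟨x, hx⟩)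
  rw [← Submodule.Quotient.mk_smul, Submodule.Quotient.mk_eq_zero] at h
  exact h

theorem mem_iff_lorentzForm_of_isSelfDualLat (hsd : IsSelfDualLat Λ)
    {v : (Fin m → ℝ) × (Fin n → ℝ)} :
    v ∈ Λ ↔ ∀ y ∈ Λ, ∃ k : ℤ, lorentzForm v y = (k : ℝ) :=
  Set.ext_iff.mp hsd v

theorem lat10_eq_dualLat_map_fst (hsd : IsSelfDualLat Λ) :
    lat10 Λ = dualLat (Λ.map (LinearMap.fst ℤ _ _)) := by
  ext a
  change (a, 0) ∈ Λ ↔ _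
  rw [mem_iff_lorentzForm_of_isSelfDualLat hsd]
  simp [mem_dualLat_iff, lorentzForm, dotProduct]

theorem lat20_eq_dualLat_map_snd (hsd : IsSelfDualLat Λ) :
    lat20 Λ = dualLat (Λ.map (LinearMap.snd ℤ _ _)) := by
  ext b
  rw [← neg_mem_iff]
  change (0, -b) ∈ Λ ↔ _
  rw [mem_iff_lorentzForm_of_isSelfDualLat hsd]
  simpa [mem_dualLat_iff, lorentzForm, dotProduct] using forall_comm

theorem dualLat_lat10 (hsd : IsSelfDualLat Λ) (hfin : Finite (Λ ⧸ (lat0 Λ).comap Λ.subtype)) :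
    dualLat (lat10 Λ) = Λ.map (LinearMap.fst ℤ _ _) := by
  obtain ⟨N, hN, hNΛ⟩ := exists_nsmul_mem_lat0 hfin
  have hdual := lat10_eq_dualLat_map_fst hsd
  rw [hdual]
  refine dualLat_dualLat_of_nsmul_mem ?_ hN ?_ <;> rw [← hdual]
  · exact fun a ha => ⟨(a, 0), ha, rfl⟩
  · rintro _ ⟨x, hx, rfl⟩
    exact (hNΛ x hx).1

theorem dualLat_lat20 (hsd : IsSelfDualLat Λ) (hfin : Finite (Λ ⧸ (lat0 Λ).comap Λ.subtype)) :
    dualLat (lat20 Λ) = Λ.map (LinearMap.snd ℤ _ _) := by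
  obtain ⟨N, hN, hNΛ⟩ := exists_nsmul_mem_lat0 hfin
  have hdual := lat20_eq_dualLat_map_snd hsd
  rw [hdual]
  refine dualLat_dualLat_of_nsmul_mem ?_ hN ?_ <;> rw [← hdual]
  · exact fun b hb => ⟨(0, b), hb, rfl⟩
  · rintro _ ⟨x, hx, rfl⟩
    exact (hNΛ x hx).2

end Lorentzian

theorem llcft_phi_one_phi_two_isomorphism_general {m n : ℕ}
    (Λ : Submodule ℤ ((Fin m → ℝ) × (Fin n → ℝ))) (hsd : IsSelfDualLat Λ)
    (hfin : Finite ((↥Λ) ⧸ (lat0 Λ).comap Λ.subtype)) :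
    (Nat.card ((↥Λ) ⧸ (lat0 Λ).comap Λ.subtype)
        = Nat.card ((↥(dualLat (lat10 Λ))) ⧸ (lat10 Λ).comap (dualLat (lat10 Λ)).subtype) ∧
      Nat.card ((↥Λ) ⧸ (lat0 Λ).comap Λ.subtype)
        = Nat.card ((↥(dualLat (lat20 Λ))) ⧸ (lat20 Λ).comap (dualLat (lat20 Λ)).subtype)) ∧
    (∃ φ₁ : ((↥Λ) ⧸ (lat0 Λ).comap Λ.subtype) ≃+
        ((↥(dualLat (lat10 Λ))) ⧸ (lat10 Λ).comap (dualLat (lat10 Λ)).subtype),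
      ∀ (x : (Fin m → ℝ) × (Fin n → ℝ)) (hx : x ∈ Λ) (h1 : x.1 ∈ dualLat (lat10 Λ)),
        φ₁ (Submodule.Quotient.mk (⟨x, hx⟩ : ↥Λ))
          = Submodule.Quotient.mk (⟨x.1, h1⟩ : ↥(dualLat (lat10 Λ)))) ∧
    (∃ φ₂ : ((↥Λ) ⧸ (lat0 Λ).comap Λ.subtype) ≃+
        ((↥(dualLat (lat20 Λ))) ⧸ (lat20 Λ).comap (dualLat (lat20 Λ)).subtype),
      ∀ (x : (Fin m → ℝ) × (Fin n → ℝ)) (hx : x ∈ Λ) (h2 : x.2 ∈ dualLat (lat20 Λ)),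
        φ₂ (Submodule.Quotient.mk (⟨x, hx⟩ : ↥Λ))
          = Submodule.Quotient.mk (⟨x.2, h2⟩ : ↥(dualLat (lat20 Λ)))) := by
  have hmap₁ := (dualLat_lat10 hsd hfin).symm
  have hmap₂ := (dualLat_lat20 hsd hfin).symm
  have hlat₁ (x) (hx : x ∈ Λ) : x ∈ lat0 Λ ↔ x.1 ∈ lat10 Λ := mem_lat0_iff_fst_mem_lat10 hx
  have hlat₂ (x) (hx : x ∈ Λ) : x ∈ lat0 Λ ↔ x.2 ∈ lat20 Λ := mem_lat0_iff_snd_mem_lat20 hx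
  let φ₁ := quotientEquivOfMapEq hmap₁ hlat₁
  let φ₂ := quotientEquivOfMapEq hmap₂ hlat₂
  exact ⟨⟨Nat.card_congr φ₁.toEquiv, Nat.card_congr φ₂.toEquiv⟩,
    ⟨φ₁.toAddEquiv, fun _ hx h1 => quotientEquivOfMapEq_mk hmap₁ hlat₁ hx h1⟩,
    ⟨φ₂.toAddEquiv, fun _ hx h2 => quotientEquivOfMapEq_mk hmap₂ hlat₂ hx h2⟩⟩

/-- For an even, self-dual Lorentzian lattice `Λ` of signature `(m,n)` with
`Λ/Λ₀` finite, the cardinalities `|Λ/Λ₀|`, `|(Λ₁⁰)^*/Λ₁⁰|`, `|(Λ₂⁰)^*/Λ₂⁰|` coincide, and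
`φ₁ : [(α,β)] ↦ [α]` and `φ₂ : [(α,β)] ↦ [β]` are group isomorphisms. -/
theorem llcft_phi_one_phi_two_isomorphism {m n : ℕ}
    (Λ : Submodule ℤ ((Fin m → ℝ) × (Fin n → ℝ)))
    (hfree : Module.Free ℤ Λ) (hfg : Module.Finite ℤ Λ)
    (hrank : Module.finrank ℤ Λ = m + n)
    (hspan : Submodule.span ℝ (Λ : Set ((Fin m → ℝ) × (Fin n → ℝ))) = ⊤)
    (heven : IsEvenLat Λ) (hsd : IsSelfDualLat Λ)
    (hfin : Finite ((↥Λ) ⧸ (lat0 Λ).comap Λ.subtype)) :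
    (Nat.card ((↥Λ) ⧸ (lat0 Λ).comap Λ.subtype)
        = Nat.card ((↥(dualLat (lat10 Λ))) ⧸ (lat10 Λ).comap (dualLat (lat10 Λ)).subtype) ∧
      Nat.card ((↥Λ) ⧸ (lat0 Λ).comap Λ.subtype)
        = Nat.card ((↥(dualLat (lat20 Λ))) ⧸ (lat20 Λ).comap (dualLat (lat20 Λ)).subtype)) ∧
    (∃ φ₁ : ((↥Λ) ⧸ (lat0 Λ).comap Λ.subtype) ≃+
        ((↥(dualLat (lat10 Λ))) ⧸ (lat10 Λ).comap (dualLat (lat10 Λ)).subtype),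
      ∀ (x : (Fin m → ℝ) × (Fin n → ℝ)) (hx : x ∈ Λ) (h1 : x.1 ∈ dualLat (lat10 Λ)),
        φ₁ (Submodule.Quotient.mk (⟨x, hx⟩ : ↥Λ))
          = Submodule.Quotient.mk (⟨x.1, h1⟩ : ↥(dualLat (lat10 Λ)))) ∧
    (∃ φ₂ : ((↥Λ) ⧸ (lat0 Λ).comap Λ.subtype) ≃+
        ((↥(dualLat (lat20 Λ))) ⧸ (lat20 Λ).comap (dualLat (lat20 Λ)).subtype),
      ∀ (x : (Fin m → ℝ) × (Fin n → ℝ)) (hx : x ∈ Λ) (h2 : x.2 ∈ dualLat (lat20 Λ)),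
        φ₂ (Submodule.Quotient.mk (⟨x, hx⟩ : ↥Λ))
          = Submodule.Quotient.mk (⟨x.2, h2⟩ : ↥(dualLat (lat20 Λ)))) := by
  exact llcft_phi_one_phi_two_isomorphism_general Λ hsd hfin
end

section
/- Let Λ be an even, self-dual Lorentzian lattice of signature (m,n). Then the ℤ-module Λ_1^0 has rank m if and only if the ℤ-module Λ_2^0 has rank n. -/
open Finset

/-!
Let `Λ` be integral and suppose that `Λ₁⁰` has rank `m`. A positive definite integral lattice is
discrete, so `Λ₁⁰` spans `ℝ^m`. The projection `p` of `Λ` to `ℝ^m` contains `Λ₁⁰` and, since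
`(α, β) ∘ (α', 0) = ⟨α, α'⟩`, lies in the dual of `Λ₁⁰`; hence it too is a full lattice in `ℝ^m`.
As `Λ₂⁰` is the kernel of `p` on `Λ`, this gives `rank Λ = m + rank Λ₂⁰`. Exchanging the two factors
only changes the sign of the form, so the roles of `Λ₁⁰` and `Λ₂⁰` are symmetric.
-/

section ProdSubmodule

universe u v w

variable {R : Type u} {M : Type v} {N : Type w} [Ring R] [AddCommGroup M] [AddCommGroup N]
  [Module R M] [Module R N]

lemma inf_ker_fst_eq_map_inr_comap_inr (P : Submodule R (M × N)) :
    P ⊓ LinearMap.ker (LinearMap.fst R M N) =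
      (P.comap (LinearMap.inr R M N)).map (LinearMap.inr R M N) := by
  rw [Submodule.map_comap_eq, LinearMap.ker_fst, inf_comm]

lemma finite_of_finite_map_fst_of_finite_comap_inr (P : Submodule R (M × N))
    [Module.Finite R (P.map (LinearMap.fst R M N))]
    [Module.Finite R (P.comap (LinearMap.inr R M N))] : Module.Finite R P := by
  refine Module.Finite.iff_fg.2 (Submodule.fg_of_fg_map_of_fg_inf_ker (LinearMap.fst R M N)
    (Module.Finite.iff_fg.1 inferInstance) ?_)
  rw [inf_ker_fst_eq_map_inr_comap_inr]
  exact (Module.Finite.iff_fg.1 inferInstance).map _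

lemma finrank_map_fst_add_finrank_comap_inr [StrongRankCondition R] [HasRankNullity.{max v w} R]
    (P : Submodule R (M × N)) [Module.Finite R P] :
    Module.finrank R (P.map (LinearMap.fst R M N)) +
      Module.finrank R (P.comap (LinearMap.inr R M N)) = Module.finrank R P := by
  have finrank_ker : Module.finrank R (LinearMap.ker ((LinearMap.fst R M N).domRestrict P)) =
      Module.finrank R (P.comap (LinearMap.inr R M N)) := by
    rw [LinearMap.ker_domRestrict, ← Submodule.finrank_map_subtype_eq,
      Submodule.map_comap_subtype, inf_ker_fst_eq_map_inr_comap_inr]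
    exact (Submodule.equivMapOfInjective _ LinearMap.inr_injective _).finrank_eq.symm
  rw [← finrank_ker, ← LinearMap.range_domRestrict,
    ← (LinearMap.quotKerEquivRange _).finrank_eq]
  exact Submodule.finrank_quotient_add_finrank _

end ProdSubmodule

section DualLattice

lemma mem_dualLat {d : ℕ} {L : Submodule ℤ (Fin d → ℝ)} {x : Fin d → ℝ} :
    x ∈ dualLat L ↔ ∀ y ∈ L, ∃ k : ℤ, x ⬝ᵥ y = k :=
  Iff.rfl

lemma dotProduct_eq_zero_of_mem_span {R ι : Type*} [CommSemiring R] [Fintype ι] {s : Set (ι → R)}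
    {x y : ι → R} (hx : ∀ z ∈ s, x ⬝ᵥ z = 0) (hy : y ∈ Submodule.span R s) : x ⬝ᵥ y = 0 :=
  LinearMap.eqOn_span (f := dotProductBilin R R x) (g := 0) hx hy

lemma discreteTopology_of_le_dualLat {d : ℕ} {L M : Submodule ℤ (Fin d → ℝ)}
    (hL : L ≤ dualLat M) (hspan : (L : Set (Fin d → ℝ)) ⊆ Submodule.span ℝ (M : Set (Fin d → ℝ))) :
    DiscreteTopology L := by
  obtain ⟨b, hbM, hb, -⟩ := Submodule.exists_fun_fin_finrank_span_eq ℝ (M : Set (Fin d → ℝ))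
  -- Each `x ∈ U` pairs with every `b i` to an integer of absolute value `< 1`, so `x` is orthogonal
  -- to `span M`, which contains it.
  let U : Set L := {x | ∀ i, |(x : Fin d → ℝ) ⬝ᵥ b i| < 1}
  have U_open : IsOpen U := by
    simp only [U, Set.ofPred_forall]
    exact isOpen_iInter_of_finite fun i =>
      isOpen_lt (continuous_subtype_val.dotProduct continuous_const).abs continuous_const
  have dotProduct_eq_zero : ∀ x ∈ U, ∀ i, (x : Fin d → ℝ) ⬝ᵥ b i = 0 := by
    intro x hx i
    obtain ⟨k, hk⟩ := mem_dualLat.1 (hL x.2) (b i) (hbM i)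
    have abs_lt_one : |(k : ℝ)| < 1 := hk ▸ hx i
    have k_eq_zero : k = 0 := Int.abs_lt_one_iff.1 (by exact_mod_cast abs_lt_one)
    rw [hk, k_eq_zero, Int.cast_zero]
  have U_eq : U = {0} := by
    refine Set.Subset.antisymm (fun x hx => ?_) (by simp [U])
    have self_orthogonal : (x : Fin d → ℝ) ⬝ᵥ x = 0 :=
      dotProduct_eq_zero_of_mem_span (Set.forall_mem_range.2 (dotProduct_eq_zero x hx))
        (hb.ge (hspan x.2))
    exact Subtype.ext (dotProduct_self_eq_zero.1 self_orthogonal)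
  exact discreteTopology_of_isOpen_singleton_zero (U_eq ▸ U_open)

end DualLattice

lemma span_eq_top_of_finrank_eq {E : Type*} [NormedAddCommGroup E] [NormedSpace ℝ E]
    [FiniteDimensional ℝ E] {L : Submodule ℤ E} [DiscreteTopology L]
    (h : Module.finrank ℤ L = Module.finrank ℝ E) : Submodule.span ℝ (L : Set E) = ⊤ := by
  have finrank_span := Real.finrank_eq_int_finrank_of_discrete (s := (L : Set E))
    (by rwa [Submodule.span_eq])
  rw [Set.finrank, Set.finrank, Submodule.span_eq, h] at finrank_span
  exact Submodule.eq_top_of_finrank_eq finrank_span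

section SwapLat

variable {m n : ℕ} {Λ : Submodule ℤ ((Fin m → ℝ) × (Fin n → ℝ))}

/-- The lattice of signature `(n,m)` obtained from `Λ` by exchanging the factors of `ℝ^m × ℝ^n`;
it makes statements about `Λ_1^0` and `Λ_2^0` interchangeable. -/
def swapLat (Λ : Submodule ℤ ((Fin m → ℝ) × (Fin n → ℝ))) :
    Submodule ℤ ((Fin n → ℝ) × (Fin m → ℝ)) :=
  Λ.comap (LinearEquiv.prodComm ℤ (Fin n → ℝ) (Fin m → ℝ)).toLinearMap

lemma lat10_swapLat : lat10 (swapLat Λ) = lat20 Λ := rfl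

lemma lat20_swapLat : lat20 (swapLat Λ) = lat10 Λ := rfl

lemma finrank_swapLat : Module.finrank ℤ (swapLat Λ) = Module.finrank ℤ Λ := by
  rw [swapLat, Submodule.comap_equiv_eq_map_symm]
  exact LinearEquiv.finrank_map_eq _ _

lemma lorentzForm_swap (x y : (Fin m → ℝ) × (Fin n → ℝ)) :
    lorentzForm x.swap y.swap = -lorentzForm x y :=
  (neg_sub _ _).symm

lemma IsIntegralLat.swapLat (hΛ : IsIntegralLat Λ) : IsIntegralLat (swapLat Λ) := by
  intro x hx y hy
  obtain ⟨k, hk⟩ := hΛ x.swap hx y.swap hy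
  exact ⟨-k, by rw [Int.cast_neg, ← hk, lorentzForm_swap, neg_neg]⟩

end SwapLat

section IntegralLattice

variable {m n : ℕ} {Λ : Submodule ℤ ((Fin m → ℝ) × (Fin n → ℝ))}

lemma IsSelfDualLat.isIntegralLat (hΛ : IsSelfDualLat Λ) : IsIntegralLat Λ :=
  fun _ hx => hΛ.subset hx

lemma lat10_le_map_fst : lat10 Λ ≤ Λ.map (LinearMap.fst ℤ (Fin m → ℝ) (Fin n → ℝ)) :=
  fun a ha => ⟨(a, 0), ha, rfl⟩

namespace IsIntegralLat

lemma map_fst_le_dualLat_lat10 (hΛ : IsIntegralLat Λ) :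
    Λ.map (LinearMap.fst ℤ (Fin m → ℝ) (Fin n → ℝ)) ≤ dualLat (lat10 Λ) := by
  rintro _ ⟨x, hx, rfl⟩ a ha
  simpa [lorentzForm] using hΛ x hx (a, 0) ha

lemma discreteTopology_lat10 (hΛ : IsIntegralLat Λ) : DiscreteTopology (lat10 Λ) :=
  discreteTopology_of_le_dualLat (lat10_le_map_fst.trans hΛ.map_fst_le_dualLat_lat10)
    Submodule.subset_span

lemma discreteTopology_lat20 (hΛ : IsIntegralLat Λ) : DiscreteTopology (lat20 Λ) :=
  lat10_swapLat ▸ hΛ.swapLat.discreteTopology_lat10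

lemma span_lat10_eq_top (hΛ : IsIntegralLat Λ) (h : Module.finrank ℤ (lat10 Λ) = m) :
    Submodule.span ℝ (lat10 Λ : Set (Fin m → ℝ)) = ⊤ :=
  have := hΛ.discreteTopology_lat10
  span_eq_top_of_finrank_eq (h.trans (Module.finrank_fin_fun ℝ).symm)

lemma finrank_eq_add_finrank_lat20 (hΛ : IsIntegralLat Λ) (h : Module.finrank ℤ (lat10 Λ) = m) :
    Module.finrank ℤ Λ = m + Module.finrank ℤ (lat20 Λ) := by
  let P := Λ.map (LinearMap.fst ℤ (Fin m → ℝ) (Fin n → ℝ))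
  have span_lat10 := hΛ.span_lat10_eq_top h
  have P_discrete : DiscreteTopology P :=
    discreteTopology_of_le_dualLat hΛ.map_fst_le_dualLat_lat10 (by simp [span_lat10])
  have P_full : IsZLattice ℝ P :=
    ⟨top_unique (span_lat10.ge.trans (Submodule.span_mono lat10_le_map_fst))⟩
  have P_rank : Module.finrank ℤ P = m := by rw [ZLattice.rank ℝ P, Module.finrank_fin_fun]
  have lat20_discrete := hΛ.discreteTopology_lat20
  have lat20_finite : Module.Finite ℤ (Λ.comap (LinearMap.inr ℤ (Fin m → ℝ) (Fin n → ℝ))) :=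
    inferInstanceAs (Module.Finite ℤ (lat20 Λ))
  have P_finite : Module.Finite ℤ P := ZLattice.module_finite ℝ P
  have Λ_finite : Module.Finite ℤ Λ := finite_of_finite_map_fst_of_finite_comap_inr Λ
  rw [← finrank_map_fst_add_finrank_comap_inr Λ, P_rank, lat20]

lemma finrank_eq_add_finrank_lat10 (hΛ : IsIntegralLat Λ) (h : Module.finrank ℤ (lat20 Λ) = n) :
    Module.finrank ℤ Λ = n + Module.finrank ℤ (lat10 Λ) := by
  rw [← lat10_swapLat] at h
  rw [← finrank_swapLat, hΛ.swapLat.finrank_eq_add_finrank_lat20 h, lat20_swapLat]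

end IsIntegralLat

end IntegralLattice

theorem lat10_fullrank_iff_lat20_fullrank_general {m n : ℕ}
    (Λ : Submodule ℤ ((Fin m → ℝ) × (Fin n → ℝ)))
    (hrank : Module.finrank ℤ Λ = m + n) (hint : IsIntegralLat Λ) :
    Module.finrank ℤ (lat10 Λ) = m ↔ Module.finrank ℤ (lat20 Λ) = n := by
  constructor <;> intro h
  · have := hint.finrank_eq_add_finrank_lat20 h
    omega
  · have := hint.finrank_eq_add_finrank_lat10 h
    omega

/-- For an even, self-dual Lorentzian lattice `Λ` of signature `(m,n)`,
the sublattice `Λ₁⁰` has rank `m` iff `Λ₂⁰` has rank `n`. -/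
theorem lat10_fullrank_iff_lat20_fullrank {m n : ℕ}
    (Λ : Submodule ℤ ((Fin m → ℝ) × (Fin n → ℝ)))
    (hfree : Module.Free ℤ Λ) (hfg : Module.Finite ℤ Λ)
    (hrank : Module.finrank ℤ Λ = m + n)
    (hspan : Submodule.span ℝ (Λ : Set ((Fin m → ℝ) × (Fin n → ℝ))) = ⊤)
    (heven : IsEvenLat Λ) (hsd : IsSelfDualLat Λ) :
    Module.finrank ℤ (lat10 Λ) = m ↔ Module.finrank ℤ (lat20 Λ) = n :=
  lat10_fullrank_iff_lat20_fullrank_general Λ hrank hsd.isIntegralLat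
end
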